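/- Let K, L ∈ K^n_s (origin-symmetric convex bodies with nonempty interior), I an origin-symmetric segment, and set K_t = (K ⊖ I) + tI for t ∈ [0,1], assuming K = (K ⊖ I) + I and K ⊖ I has nonempty interior. Let f̄ be a difference of support functions satisfying V(K[n-1], f̄)/V(K) = ((n-1)/n)·V(K[n-2], I, f̄)/V(K[n-1], I). Then for every t ∈ [0,1], V(K_t[n-1], f̄)/V(K_t) = ((n-1)/n)·V(K_t[n-2], I, f̄)/V(K_t[n-1], I). -/

import Mathlib

/-! With `n = m + 2`, `K₀ = K ⊖ I` and `K_t = K₀ + tI`, the mixed volumes along the family are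
`V(K_t) = V(K₀) + t n V(K₀[n-1], I)`, `V(K_t[n-1], I) = V(K₀[n-1], I)`,
`V(K_t[n-1], A) = V(K₀[n-1], A) + t (n-1) V(K₀[n-2], I, A)` and
`V(K_t[n-2], I, A) = V(K₀[n-2], I, A)` (`parallel_mixedVol`). After clearing denominators, which are
positive since adding `I` strictly increases the volume of `K₀` (`volume_lt_volume_add`), the
normalization at `t` reads
`n V(K₀[n-1], I) V(K₀[n-1], f̄) = (n-1) V(K₀[n-2], I, f̄) V(K₀)`, which does not involve `t`; by
hypothesis it holds at `t = 1`.

The four formulas rest on the multilinearity of mixed volumes, which is obtained by writing the volume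
of a Minkowski combination as an integral of determinants. Let `πᵢ` be the metric projection onto the
convex body `Cᵢ`, and `cᵢ ≥ 0`. The map `F = ∑ cᵢ πᵢ` is Lipschitz, takes values in `∑ cᵢ Cᵢ`, and
covers the interior of this body, since `F` is the gradient of a convex function which becomes coercive
when tilted by an interior point (`interior_subset_range`). If `F x = F y`, then `F` is constant on the
segment from `x` to `y`, so `F` is injective on the set where its derivative is invertible. The change
of variables formula, with Rademacher's theorem, gives `vol (∑ cᵢ Cᵢ) = ∫ det (∑ cᵢ Dπᵢ)`
(`volume_sum_smul`).

Consequently the polarization of the volume is the integral of the polarization of the determinant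
(`mixedVol_sum_smul`), which is multilinear and symmetric pointwise (`mixedDisc`). The derivative of
the projection onto the segment `I` has rank at most one, with range in a fixed line, so mixed
discriminants in which it occurs twice vanish (`mixedDisc_eq_zero`); this replaces
`V(I, I, ·, …, ·) = 0` and leaves only the terms of order at most one in `t`.
-/

open Set MeasureTheory Pointwise

/-- The mixed volume of `n` convex bodies in `ℝⁿ`, via the polarization formula. -/
noncomputable def mixedVol {n : ℕ} (C : Fin n → Set (EuclideanSpace ℝ (Fin n))) : ℝ :=
  ((n.factorial : ℝ))⁻¹ *
    ∑ S : Finset (Fin n), (-1 : ℝ) ^ (n - S.card) * (volume (∑ i ∈ S, C i)).toReal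

/-- `V(M[n-1], X)` in dimension `n = m+2`. -/
noncomputable def mvOne {m : ℕ} (M X : Set (EuclideanSpace ℝ (Fin (m + 2)))) : ℝ :=
  mixedVol (Fin.cons X (fun _ : Fin (m + 1) => M))

/-- `V(M[n-2], X, Y)` in dimension `n = m+2`. -/
noncomputable def mvTwo {m : ℕ} (M X Y : Set (EuclideanSpace ℝ (Fin (m + 2)))) : ℝ :=
  mixedVol (Fin.cons X (Fin.cons Y (fun _ : Fin m => M)))

def minkDiff {n : ℕ} (K L : Set (EuclideanSpace ℝ (Fin n))) :
    Set (EuclideanSpace ℝ (Fin n)) :=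
  {x | ∀ y ∈ L, y + x ∈ K}

/-! ### Metric projections and their derivatives -/

/-- `π` is the metric projection onto `C`, characterised by its variational inequality. -/
def IsProj {E : Type*} [NormedAddCommGroup E] [InnerProductSpace ℝ E]
    (C : Set E) (π : E → E) : Prop :=
  ∀ x, π x ∈ C ∧ ∀ y ∈ C, inner ℝ (x - π x) (y - π x) ≤ 0

section Projection

variable {E : Type*} [NormedAddCommGroup E] [InnerProductSpace ℝ E]

lemma exists_isProj {C : Set E} (hne : C.Nonempty) (hcomp : IsCompact C) (hconv : Convex ℝ C) :
    ∃ π : E → E, IsProj C π := by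
  choose π h1 h2 using exists_norm_eq_iInf_of_complete_convex hne hcomp.isComplete hconv
  exact ⟨π, fun x => ⟨h1 x, (norm_eq_iInf_iff_real_inner_le_zero hconv (h1 x)).1 (h2 x)⟩⟩

lemma IsProj.cocoercive {C : Set E} {π : E → E} (h : IsProj C π) (x y : E) :
    ‖π x - π y‖ ^ 2 ≤ inner ℝ (π x - π y) (x - y) := by
  have h1 := (h x).2 _ (h y).1
  have h2 := (h y).2 _ (h x).1
  rw [← real_inner_self_eq_norm_sq]
  simp only [inner_sub_left, inner_sub_right] at *
  rw [real_inner_comm x (π x), real_inner_comm x (π y), real_inner_comm y (π x),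
    real_inner_comm y (π y)]
  linarith [real_inner_comm (π x) (π y)]

lemma IsProj.lipschitz {C : Set E} {π : E → E} (h : IsProj C π) : LipschitzWith 1 π := by
  refine LipschitzWith.of_dist_le_mul fun x y => ?_
  rw [dist_eq_norm, dist_eq_norm, NNReal.coe_one, one_mul]
  have h1 := h.cocoercive x y
  have h2 := real_inner_le_norm (π x - π y) (x - y)
  by_contra! hlt
  nlinarith [norm_nonneg (π x - π y), norm_nonneg (x - y)]

lemma IsProj.unique {C : Set E} {π : E → E} (h : IsProj C π) {x a : E} (ha : a ∈ C)
    (hx : ∀ y ∈ C, inner ℝ (x - a) (y - a) ≤ 0) : π x = a := by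
  have h1 := (h x).2 a ha
  have h2 := hx _ (h x).1
  have h3 : ‖π x - a‖ ^ 2 ≤ 0 := by
    rw [← real_inner_self_eq_norm_sq]
    have e1 : inner ℝ (x - π x) (a - π x) = - inner ℝ (x - π x) (π x - a) := by
      rw [← inner_neg_right, neg_sub]
    have e2 : inner ℝ (π x - a) (π x - a)
        = inner ℝ (x - a) (π x - a) - inner ℝ (x - π x) (π x - a) := by
      rw [← inner_sub_left]; congr 1; abel
    linarith
  have h4 : ‖π x - a‖ = 0 := by nlinarith [norm_nonneg (π x - a)]
  exact sub_eq_zero.1 (norm_eq_zero.1 h4)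

/-- The fibres of a metric projection are convex, being translated normal cones. -/
lemma IsProj.segment_const {C : Set E} {π : E → E} (h : IsProj C π) {x y : E} (hxy : π x = π y)
    {s : ℝ} (hs0 : 0 ≤ s) (hs1 : s ≤ 1) : π (x + s • (y - x)) = π x := by
  refine h.unique (h x).1 fun z hz => ?_
  have h1 := (h x).2 z hz
  have h2 := (h y).2 z hz
  rw [← hxy] at h2
  have e : x + s • (y - x) - π x = (1 - s) • (x - π x) + s • (y - π x) := by module
  rw [e, inner_add_left, inner_smul_left, inner_smul_left]
  simp only [conj_trivial]
  nlinarith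

/-- `π x` maximises `y ↦ ⟪x, y⟫ - ‖y‖² / 2` over `C`. -/
lemma IsProj.le_envelope {C : Set E} {π : E → E} (h : IsProj C π) (x : E) {y : E} (hy : y ∈ C) :
    inner ℝ x y - ‖y‖ ^ 2 / 2 ≤ inner ℝ x (π x) - ‖π x‖ ^ 2 / 2 := by
  have h1 := (h x).2 y hy
  have h2 : 0 ≤ ‖y - π x‖ ^ 2 := by positivity
  rw [← real_inner_self_eq_norm_sq] at *
  rw [← real_inner_self_eq_norm_sq]
  simp only [inner_sub_left, inner_sub_right] at *
  linarith [real_inner_comm (π x) y]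

/-- A line containing all values of a map contains all values of its derivative (including the
conventional value `0` where the map is not differentiable). -/
lemma fderiv_mem_span {f : E → E} {p : E} (hf : ∀ x, f x ∈ Submodule.span ℝ {p}) (x v : E) :
    fderiv ℝ f x v ∈ Submodule.span ℝ {p} := by
  by_cases hd : DifferentiableAt ℝ f x
  · set W : Submodule ℝ E := Submodule.span ℝ {p}
    let T : E →L[ℝ] E := ContinuousLinearMap.id ℝ E - W.starProjection
    have hT : ∀ w, T w = 0 ↔ w ∈ W := fun w => by
      simp only [T, sub_apply, ContinuousLinearMap.id_apply, sub_eq_zero]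
      exact eq_comm.trans Submodule.starProjection_eq_self_iff
    have h1 : HasFDerivAt (fun y => T (f y)) (T ∘L fderiv ℝ f x) x :=
      T.hasFDerivAt.comp x hd.hasFDerivAt
    have h2 : (fun y => T (f y)) = fun _ => 0 := by
      funext y; exact (hT _).2 (hf y)
    rw [h2] at h1
    have h3 := h1.unique (hasFDerivAt_const (0 : E) x)
    exact (hT _).1 (by simpa using DFunLike.congr_fun h3 v)
  · rw [fderiv_zero_of_not_differentiableAt hd]; simp

/-- A metric projection is monotone, so its derivative is a monotone linear map. Where the projection
is not differentiable the derivative is `0` by convention, and the claim is trivial. -/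
lemma IsProj.fderiv_nonneg {C : Set E} {π : E → E} (h : IsProj C π) (x v : E) :
    0 ≤ inner ℝ (fderiv ℝ π x v) v := by
  by_cases hd : DifferentiableAt ℝ π x
  · have h1 := hd.hasFDerivAt.hasLineDerivAt v
    have h2 := (hasDerivAt_iff_tendsto_slope_zero.1 h1)
    have h3 : Filter.Tendsto (fun t : ℝ => t⁻¹ • (π (x + t • v) - π x))
      (nhdsWithin 0 {0}ᶜ) (nhds (fderiv ℝ π x v)) := by simpa using h2
    have h4 := Filter.Tendsto.inner (𝕜 := ℝ) h3 (tendsto_const_nhds (x := v))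
    refine ge_of_tendsto h4 ?_
    filter_upwards [self_mem_nhdsWithin] with t ht
    have h5 := h.cocoercive (x + t • v) x
    rw [add_sub_cancel_left, inner_smul_right] at h5
    rw [inner_smul_left]
    simp only [conj_trivial]
    have h6 : 0 ≤ t * inner ℝ (π (x + t • v) - π x) v := le_trans (by positivity) h5
    have e : t⁻¹ * inner ℝ (π (x + t • v) - π x) v
      = (t⁻¹) ^ 2 * (t * inner ℝ (π (x + t • v) - π x) v) := by
      have : t ≠ 0 := ht
      field_simp
    rw [e]; positivity
  · rw [fderiv_zero_of_not_differentiableAt hd]; simp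

/-- A monotone linear map has nonnegative determinant: the segment from the identity to it
consists of invertible maps, except possibly for its endpoint. -/
lemma det_nonneg_of_inner_nonneg [FiniteDimensional ℝ E] (M : E →L[ℝ] E)
    (hM : ∀ v, 0 ≤ inner ℝ (M v) v) : 0 ≤ M.det := by
  by_contra! hlt
  let g : ℝ → ℝ := fun t => ((1 - t) • ContinuousLinearMap.id ℝ E + t • M).det
  have hg : Continuous g := ContinuousLinearMap.continuous_det.comp (by fun_prop)
  have g0 : g 0 = 1 := by simp [g, ContinuousLinearMap.det]
  have g1 : g 1 = M.det := by simp [g]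
  obtain ⟨t, ⟨ht0, ht1⟩, ht⟩ := intermediate_value_Icc' zero_le_one hg.continuousOn
    (show (0 : ℝ) ∈ Icc (g 1) (g 0) by rw [g0, g1]; exact ⟨hlt.le, zero_le_one⟩)
  have ht1' : t < 1 := lt_of_le_of_ne ht1 (by rintro rfl; rw [g1] at ht; linarith)
  obtain ⟨v, hv, hv0⟩ := Submodule.exists_mem_ne_zero_of_ne_bot
    (LinearMap.bot_lt_ker_of_det_eq_zero ht).ne'
  have h1 : (1 - t) • v + t • M v = 0 := by simpa using hv
  have h2 : inner ℝ ((1 - t) • v + t • M v) v = 0 := by rw [h1, inner_zero_left]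
  rw [inner_add_left, inner_smul_left, inner_smul_left, real_inner_self_eq_norm_sq] at h2
  simp only [conj_trivial] at h2
  have := hM v
  have h3 : 0 < ‖v‖ := norm_pos_iff.2 hv0
  have h4 : 0 < (1 - t) * ‖v‖ ^ 2 := by have : 0 < 1 - t := by linarith
                                        positivity
  nlinarith

end Projection

/-! ### Nonnegative combinations of metric projections -/

section SumOfProjections

variable {E : Type*} [NormedAddCommGroup E] [InnerProductSpace ℝ E]
  {ι : Type*} [Fintype ι] {C : ι → Set E} {π : ι → E → E} {c : ι → ℝ}

/-- By cocoercivity, a combination of projections separates any two points that one of the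
projections with nonzero weight separates. -/
lemma eq_of_sum_proj_eq (hπ : ∀ i, IsProj (C i) (π i)) (hc : ∀ i, 0 ≤ c i) {x y : E}
    (h : ∑ i, c i • π i x = ∑ i, c i • π i y) (i : ι) (hi : c i ≠ 0) : π i x = π i y := by
  have h1 : ∑ i, c i * ‖π i x - π i y‖ ^ 2 ≤ 0 := by
    calc ∑ i, c i * ‖π i x - π i y‖ ^ 2
        ≤ ∑ i, c i * inner ℝ (π i x - π i y) (x - y) :=
          Finset.sum_le_sum fun i _ =>
            mul_le_mul_of_nonneg_left ((hπ i).cocoercive x y) (hc i)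
      _ = inner ℝ (∑ i, c i • π i x - ∑ i, c i • π i y) (x - y) := by
          rw [← Finset.sum_sub_distrib, sum_inner]
          refine Finset.sum_congr rfl fun i _ => ?_
          rw [← smul_sub, inner_smul_left]; simp
      _ = 0 := by rw [h, sub_self, inner_zero_left]
  have h2 : ∀ i ∈ Finset.univ, 0 ≤ c i * ‖π i x - π i y‖ ^ 2 := fun i _ =>
    mul_nonneg (hc i) (by positivity)
  have h3 := (Finset.sum_eq_zero_iff_of_nonneg h2).1 (le_antisymm h1 (Finset.sum_nonneg h2)) i
    (Finset.mem_univ i)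
  have h4 : ‖π i x - π i y‖ ^ 2 = 0 := (mul_eq_zero.1 h3).resolve_left hi
  exact sub_eq_zero.1 (norm_eq_zero.1 (by simpa using h4))

/-- A point of the interior of `∑ cᵢ Cᵢ` is a value of `∑ cᵢ πᵢ`: this map is the gradient of a
convex function, and tilting that function by the point makes it coercive, so that it has a
minimiser. -/
lemma interior_subset_range [FiniteDimensional ℝ E]
    (hπ : ∀ i, IsProj (C i) (π i)) (hc : ∀ i, 0 ≤ c i)
    (hcomp : ∀ i, IsCompact (C i)) :
    interior (∑ i, c i • C i) ⊆ range (fun x => ∑ i, c i • π i x) := by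
  intro z hz
  obtain ⟨r, hr, hball⟩ := Metric.nhds_basis_closedBall.mem_iff.1 (mem_interior_iff_mem_nhds.1 hz)
  have hbd : ∀ i, ∃ R : ℝ, ∀ y ∈ C i, ‖y‖ ≤ R := fun i =>
    (hcomp i).isBounded.exists_norm_le
  choose R hR using hbd
  have hcont : ∀ i, Continuous (π i) := fun i => (hπ i).lipschitz.continuous
  let φ : E → ℝ := fun x =>
    ∑ i, c i * (inner ℝ x (π i x) - ‖π i x‖ ^ 2 / 2) - inner ℝ x z
  have hφ : Continuous φ := by
    have := hcont
    fun_prop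
  have hlow : ∀ x, r * ‖x‖ - ∑ i, c i * (R i ^ 2 / 2) ≤ φ x := by
    intro x
    obtain ⟨u, hu, hux⟩ : ∃ u : E, ‖u‖ ≤ r ∧ inner ℝ x u = r * ‖x‖ := by
      by_cases hx : x = 0
      · exact ⟨0, by simpa using hr.le, by simp [hx]⟩
      · have : ‖x‖ ≠ 0 := norm_ne_zero_iff.2 hx
        refine ⟨(r / ‖x‖) • x, ?_, ?_⟩
        · rw [norm_smul, Real.norm_of_nonneg (by positivity), div_mul_cancel₀ _ this]
        · rw [inner_smul_right, real_inner_self_eq_norm_sq]; field_simp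
    have hmem : z + u ∈ ∑ i, c i • C i := hball (by simpa using hu)
    obtain ⟨g, hg, hgs⟩ := (Set.mem_finsetSum _ _ _).1 hmem
    choose y hy hyg using fun i => hg (i := i) (Finset.mem_univ i)
    simp only at hyg
    have e1 : ∑ i, c i * inner ℝ x (y i) = inner ℝ x (z + u) := by
      rw [← hgs, inner_sum]
      exact Finset.sum_congr rfl fun i _ => by rw [← hyg i, inner_smul_right]
    have h1 : ∑ i, c i * (inner ℝ x (y i) - R i ^ 2 / 2)
        ≤ ∑ i, c i * (inner ℝ x (π i x) - ‖π i x‖ ^ 2 / 2) := by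
      refine Finset.sum_le_sum fun i _ => mul_le_mul_of_nonneg_left ?_ (hc i)
      refine le_trans ?_ ((hπ i).le_envelope x (hy i))
      have := hR i _ (hy i)
      nlinarith [norm_nonneg (y i)]
    simp only [mul_sub, Finset.sum_sub_distrib] at h1
    rw [e1, inner_add_right, hux] at h1
    simp only [φ, mul_sub, Finset.sum_sub_distrib]
    linarith
  have hlim : Filter.Tendsto φ (Filter.cocompact E) Filter.atTop := by
    refine Filter.tendsto_atTop_mono hlow ?_
    refine Filter.tendsto_atTop_add_const_right _ _ ?_
    exact (tendsto_norm_cocompact_atTop).const_mul_atTop hr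
  obtain ⟨x, hx⟩ := hφ.exists_forall_le hlim
  refine ⟨x, ?_⟩
  simp only
  set F : E → E := fun x => ∑ i, c i • π i x with hF
  have hFc : Continuous F := by
    have := hcont
    fun_prop
  have key : ∀ v : E, φ (x + v) - φ x ≤ inner ℝ v (F (x + v) - z) := by
    intro v
    have h1 : ∑ i, c i * (inner ℝ x (π i (x + v)) - ‖π i (x + v)‖ ^ 2 / 2)
        ≤ ∑ i, c i * (inner ℝ x (π i x) - ‖π i x‖ ^ 2 / 2) :=
      Finset.sum_le_sum fun i _ => mul_le_mul_of_nonneg_left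
        ((hπ i).le_envelope x ((hπ i) (x + v)).1) (hc i)
    have e : inner ℝ v (F (x + v)) = ∑ i, c i * inner ℝ v (π i (x + v)) := by
      rw [hF, inner_sum]
      exact Finset.sum_congr rfl fun i _ => by rw [inner_smul_right]
    rw [inner_sub_right, e]
    simp only [φ, inner_add_left, mul_sub, mul_add, Finset.sum_sub_distrib,
      Finset.sum_add_distrib] at h1 ⊢
    linarith
  set w := F x - z with hw
  have hlimw : Filter.Tendsto (fun ε : ℝ => inner ℝ (-w) (F (x + ε • (-w)) - z))
      (nhdsWithin 0 (Ioi 0)) (nhds (inner ℝ (-w) w)) := by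
    have hc' : Continuous (fun ε : ℝ => inner ℝ (-w) (F (x + ε • (-w)) - z)) := by fun_prop
    have := (hc'.tendsto 0).mono_left (nhdsWithin_le_nhds (s := Ioi 0))
    simpa [hw] using this
  have h0 : 0 ≤ inner ℝ (-w) w := by
    refine ge_of_tendsto hlimw ?_
    filter_upwards [self_mem_nhdsWithin] with ε hε
    have h1 := key (ε • (-w))
    rw [inner_smul_left] at h1
    simp only [conj_trivial] at h1
    have h2 := hx (x + ε • (-w))
    have hε' : 0 < ε := hε
    exact nonneg_of_mul_nonneg_right (by linarith) hε'
  rw [inner_neg_left, real_inner_self_eq_norm_sq] at h0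
  have h3 : ‖w‖ = 0 := by nlinarith [norm_nonneg w]
  exact sub_eq_zero.1 (norm_eq_zero.1 h3)

end SumOfProjections

/-! ### The volume of a Minkowski combination -/

section VolumeFormula

variable {E : Type*} [NormedAddCommGroup E] [InnerProductSpace ℝ E]
  {ι : Type*} [Fintype ι] {C : ι → Set E} {c : ι → ℝ}

lemma isCompact_sum_smul (hcomp : ∀ i, IsCompact (C i)) :
    IsCompact (∑ i, c i • C i) :=
  Finset.sum_induction _ IsCompact (fun _ _ => IsCompact.add) isCompact_singleton
    fun i _ => (hcomp i).smul (c i)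

lemma convex_sum_smul (hconv : ∀ i, Convex ℝ (C i)) :
    Convex ℝ (∑ i, c i • C i) :=
  Finset.sum_induction _ (Convex ℝ) (fun _ _ => Convex.add) (convex_singleton 0)
    fun i _ => (hconv i).smul (c i)

lemma lipschitz_sum_proj {π : ι → E → E} (hπ : ∀ i, IsProj (C i) (π i)) :
    ∃ L, LipschitzWith L (fun x => ∑ i, c i • π i x) := by
  refine ⟨∑ i, ‖c i‖₊, LipschitzWith.of_dist_le_mul fun x y => ?_⟩
  rw [dist_eq_norm, ← Finset.sum_sub_distrib, NNReal.coe_sum, Finset.sum_mul]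
  refine (norm_sum_le _ _).trans (Finset.sum_le_sum fun i _ => ?_)
  rw [← smul_sub, norm_smul, coe_nnnorm]
  refine mul_le_mul_of_nonneg_left ?_ (norm_nonneg _)
  simpa [dist_eq_norm] using (hπ i).lipschitz.dist_le_mul x y

variable [FiniteDimensional ℝ E] [MeasurableSpace E] [BorelSpace E]

/-- Lipschitz maps preserve null sets, because Lebesgue measure is proportional to the Hausdorff
measure of the same dimension. -/
lemma volume_image_null {f : E → E} {L : NNReal} (hf : LipschitzWith L f) {s : Set E}
    (hs : volume s = 0) : volume (f '' s) = 0 := by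
  have h1 : μH[(Module.finrank ℝ E : ℝ)] s = 0 :=
    Measure.absolutelyContinuous_isAddHaarMeasure (μH[(Module.finrank ℝ E : ℝ)]) volume hs
  have h2 : μH[(Module.finrank ℝ E : ℝ)] (f '' s) = 0 := by
    have := hf.hausdorffMeasure_image_le (Nat.cast_nonneg (Module.finrank ℝ E)) s
    rw [h1, mul_zero] at this
    exact le_antisymm this bot_le
  exact Measure.absolutelyContinuous_isAddHaarMeasure volume (μH[(Module.finrank ℝ E : ℝ)]) h2

/-- The volume of a Minkowski combination of convex bodies, as an integral of determinants:
the change of variables formula for the map `∑ cᵢ πᵢ`, which is injective where its derivative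
is invertible and covers the interior of the body. Both the points where some `πᵢ` is not
differentiable (Rademacher) and those where the determinant vanishes have null image. -/
lemma volume_sum_smul {π : ι → E → E} (hπ : ∀ i, IsProj (C i) (π i)) (hc : ∀ i, 0 ≤ c i)
    (hcomp : ∀ i, IsCompact (C i)) (hconv : ∀ i, Convex ℝ (C i)) :
    Integrable (fun x => (∑ i, c i • fderiv ℝ (π i) x).det) (volume : Measure E) ∧
    (volume (∑ i, c i • C i)).toReal = ∫ x, (∑ i, c i • fderiv ℝ (π i) x).det := by
  set S : Set E := ∑ i, c i • C i with hS
  set F : E → E := fun x => ∑ i, c i • π i x with hF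
  set M : E → E →L[ℝ] E := fun x => ∑ i, c i • fderiv ℝ (π i) x with hM
  obtain ⟨L, hL⟩ : ∃ L, LipschitzWith L F := lipschitz_sum_proj hπ
  have hMmeas : Measurable M := by
    have : ∀ i, Measurable (fderiv ℝ (π i)) := fun i => measurable_fderiv ℝ (π i)
    exact Finset.measurable_sum _ fun i _ => (this i).const_smul (c i)
  have hdmeas : Measurable (fun x => (M x).det) :=
    ContinuousLinearMap.continuous_det.measurable.comp hMmeas
  have hdet : ∀ x, 0 ≤ (M x).det := fun x => by
    refine det_nonneg_of_inner_nonneg _ fun v => ?_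
    simp only [hM, sum_apply, smul_apply, sum_inner,
      inner_smul_left]
    exact Finset.sum_nonneg fun i _ => mul_nonneg (hc i) ((hπ i).fderiv_nonneg x v)
  set D : Set E := {x | ∀ i, DifferentiableAt ℝ (π i) x} with hD
  have hDmeas : MeasurableSet D := by
    rw [hD, Set.ofPred_forall]
    exact MeasurableSet.iInter fun i => measurableSet_of_differentiableAt ℝ (π i)
  have hDnull : volume Dᶜ = 0 := by
    have : ∀ᵐ x ∂(volume : Measure E), ∀ i, DifferentiableAt ℝ (π i) x :=
      ae_all_iff.2 fun i => (hπ i).lipschitz.ae_differentiableAt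
    exact this
  have hder : ∀ x ∈ D, HasFDerivAt F (M x) x := fun x hx =>
    HasFDerivAt.fun_sum fun i _ => (hx i).hasFDerivAt.const_smul (c i)
  set G : Set E := D ∩ {x | (M x).det ≠ 0} with hG
  have hGmeas : MeasurableSet G :=
    hDmeas.inter (hdmeas (measurableSet_singleton (0 : ℝ)).compl)
  have hinj : InjOn F G := by
    intro x hx y _ hxy
    by_contra hne
    -- `F` is constant on the segment from `x` to `y`, so its derivative at `x` kills `y - x`.
    have hseg : ∀ s ∈ Icc (0 : ℝ) 1, F (x + s • (y - x)) = F x := fun s hs => by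
      refine Finset.sum_congr rfl fun i _ => ?_
      by_cases hi : c i = 0
      · simp [hi]
      · rw [(hπ i).segment_const (eq_of_sum_proj_eq hπ hc hxy i hi) hs.1 hs.2]
    have h1 : HasDerivWithinAt (fun s : ℝ => F (x + s • (y - x))) (M x (y - x)) (Icc 0 1) 0 := by
      have := (hder x hx.1).hasLineDerivAt (y - x)
      exact HasDerivAt.hasDerivWithinAt this
    have h2 : HasDerivWithinAt (fun s : ℝ => F (x + s • (y - x))) 0 (Icc 0 1) 0 :=
      (hasDerivWithinAt_const (0 : ℝ) (Icc (0 : ℝ) 1) (F x)).congr hseg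
        (hseg 0 ⟨le_rfl, zero_le_one⟩)
    have h3 : M x (y - x) = 0 :=
      (uniqueDiffOn_Icc_zero_one 0 ⟨le_rfl, zero_le_one⟩).eq_deriv _ h1 h2
    refine hx.2 ?_
    by_contra h0
    have h4 : Function.Injective (M x) :=
      LinearMap.ker_eq_bot.1 (by
        by_contra hker
        exact hker ((LinearMap.isUnit_iff_ker_eq_bot _).1
          ((LinearMap.isUnit_iff_isUnit_det _).2 (isUnit_iff_ne_zero.2 h0))))
    exact hne (sub_eq_zero.1 (h4 (h3.trans (map_zero _).symm))).symm
  have hcv := lintegral_abs_det_fderiv_eq_addHaar_image volume hGmeas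
    (fun x hx => (hder x hx.1).hasFDerivWithinAt) hinj
  have hSint : ∫⁻ x in G, ENNReal.ofReal |(M x).det| = ∫⁻ x, ENNReal.ofReal (M x).det := by
    rw [← lintegral_indicator hGmeas]
    refine lintegral_congr_ae ?_
    have hDae : ∀ᵐ x ∂(volume : Measure E), x ∈ D := hDnull
    filter_upwards [hDae] with x hx
    by_cases h0 : (M x).det = 0
    · simp [Set.indicator, h0]
    · rw [Set.indicator_of_mem (show x ∈ G from ⟨hx, h0⟩), abs_of_nonneg (hdet x)]
  have hvol : volume (F '' G) = volume S := by
    apply le_antisymm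
    · refine measure_mono ?_
      rintro _ ⟨x, -, rfl⟩
      exact Set.finsetSum_mem_finsetSum _ _ _ fun i _ => Set.smul_mem_smul_set ((hπ i) x).1
    · have hsub : S ⊆ F '' G ∪ (F '' (D \ G) ∪ F '' Dᶜ ∪ frontier S) := by
        intro z hz
        by_cases hzi : z ∈ interior S
        · obtain ⟨x, rfl⟩ := interior_subset_range hπ hc hcomp hzi
          by_cases hxG : x ∈ G
          · exact Or.inl ⟨x, hxG, rfl⟩
          · by_cases hxD : x ∈ D
            · exact Or.inr (Or.inl (Or.inl ⟨x, ⟨hxD, hxG⟩, rfl⟩))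
            · exact Or.inr (Or.inl (Or.inr ⟨x, hxD, rfl⟩))
        · exact Or.inr (Or.inr ⟨subset_closure hz, hzi⟩)
      have n1 : volume (F '' (D \ G)) = 0 :=
        addHaar_image_eq_zero_of_det_fderivWithin_eq_zero volume
          (fun x hx => (hder x hx.1).hasFDerivWithinAt)
          (fun x hx => by
            by_contra h0
            exact hx.2 ⟨hx.1, h0⟩)
      have n2 : volume (F '' Dᶜ) = 0 := volume_image_null hL hDnull
      have n3 : volume (frontier S) = 0 := (convex_sum_smul hconv).addHaar_frontier volume
      calc volume S ≤ volume (F '' G ∪ (F '' (D \ G) ∪ F '' Dᶜ ∪ frontier S)) :=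
            measure_mono hsub
        _ = volume (F '' G) := by
            refine le_antisymm ((measure_union_le _ _).trans ?_) (measure_mono subset_union_left)
            rw [measure_union_null (measure_union_null n1 n2) n3, add_zero]
  have hfin : ∫⁻ x, ENNReal.ofReal (M x).det = volume S := by rw [← hSint, hcv, hvol]
  have hlt : volume S ≠ ⊤ := (isCompact_sum_smul hcomp).measure_lt_top.ne
  constructor
  · exact (lintegral_ofReal_ne_top_iff_integrable hdmeas.aestronglyMeasurable
      (Filter.Eventually.of_forall hdet)).1 (hfin ▸ hlt)
  · rw [integral_eq_lintegral_of_nonneg_ae (Filter.Eventually.of_forall hdet)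
      hdmeas.aestronglyMeasurable, hfin]

end VolumeFormula

/-! ### Mixed discriminants -/

section MixedDiscriminant

/-- The polarization of the determinant, normalised so that its diagonal value at `N` is `n! det N`:
the sum over all ways of choosing each row from a different matrix of the family. -/
noncomputable def mixedDisc (n : ℕ) :
    MultilinearMap ℝ (fun _ : Fin n => Matrix (Fin n) (Fin n) ℝ) ℝ :=
  ∑ σ : Equiv.Perm (Fin n),
    ((Matrix.detRowAlternating (R := ℝ) (n := Fin n)).toMultilinearMap.compLinearMap
      (fun i => (LinearMap.proj i : (Fin n → Fin n → ℝ) →ₗ[ℝ] (Fin n → ℝ)))).domDomCongr σ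

lemma mixedDisc_apply {n : ℕ} (N : Fin n → Matrix (Fin n) (Fin n) ℝ) :
    mixedDisc n N = ∑ σ : Equiv.Perm (Fin n), (Matrix.of fun a => N (σ a) a).det := by
  rw [mixedDisc, sum_apply]
  rfl

lemma mixedDisc_const {n : ℕ} (N : Matrix (Fin n) (Fin n) ℝ) :
    mixedDisc n (fun _ => N) = n.factorial * N.det := by
  rw [mixedDisc_apply]
  have : (Matrix.of fun a => N a) = N := rfl
  simp [this, Finset.card_univ, Fintype.card_perm]

lemma mixedDisc_perm {n : ℕ} (N : Fin n → Matrix (Fin n) (Fin n) ℝ) (τ : Equiv.Perm (Fin n)) :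
    mixedDisc n (fun i => N (τ i)) = mixedDisc n N := by
  rw [mixedDisc_apply, mixedDisc_apply]
  exact Equiv.sum_comp (Equiv.mulLeft τ)
    (fun σ : Equiv.Perm (Fin n) => (Matrix.of fun a => N (σ a) a).det)

/-- Inclusion-exclusion: the sum over all `S ⊇ U` is that of `(-1) ^ #T` over all `T ⊆ Uᶜ`. -/
lemma sum_superset_neg_one_pow {n : ℕ} (U : Finset (Fin n)) :
    ∑ S : Finset (Fin n), (if U ⊆ S then (-1 : ℝ) ^ (n - S.card) else 0)
      = if U = Finset.univ then 1 else 0 := by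
  have h1 : ∑ S : Finset (Fin n), (if U ⊆ S then (-1 : ℝ) ^ (n - S.card) else 0)
      = ∑ T : Finset (Fin n), (if T ⊆ Uᶜ then (-1 : ℝ) ^ T.card else 0) := by
    rw [← Equiv.sum_comp (Function.Involutive.toPerm compl (compl_involutive (α := Finset (Fin n))))]
    refine Finset.sum_congr rfl fun T _ => ?_
    have e1 : (Function.Involutive.toPerm compl (compl_involutive (α := Finset (Fin n)))) T = Tᶜ := rfl
    have e2 : U ⊆ Tᶜ ↔ T ⊆ Uᶜ := Finset.subset_compl_comm
    have e3 : n - (Tᶜ).card = T.card := by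
      rw [Finset.card_compl, Fintype.card_fin]
      have := Finset.card_le_univ T
      rw [Fintype.card_fin] at this
      omega
    rw [e1, e3]
    simp only [e2]
  rw [h1, ← Finset.sum_filter]
  have h2 : Finset.univ.filter (fun T : Finset (Fin n) => T ⊆ Uᶜ) = (Uᶜ).powerset := by
    ext T; simp
  rw [h2]
  have h3 := Finset.sum_powerset_neg_one_pow_card (x := Uᶜ)
  have h4 : ∑ T ∈ (Uᶜ).powerset, (-1 : ℝ) ^ T.card
      = ((∑ T ∈ (Uᶜ).powerset, (-1 : ℤ) ^ T.card : ℤ) : ℝ) := by push_cast; rfl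
  rw [h4, h3]
  simp [Finset.compl_eq_empty_iff]

/-- The polarization formula for the determinant: expand every row of `∑ i ∈ S, N i`; by
inclusion-exclusion only the choices of rows that use each matrix exactly once survive. -/
lemma polarization_det {n : ℕ} (N : Fin n → Matrix (Fin n) (Fin n) ℝ) :
    ∑ S : Finset (Fin n), (-1 : ℝ) ^ (n - S.card) * (∑ i ∈ S, N i).det = mixedDisc n N := by
  classical
  let g : (Fin n → Fin n) → ℝ := fun r => (Matrix.of fun a => N (r a) a).det
  have h1 : ∀ S : Finset (Fin n), (∑ i ∈ S, N i).det
      = ∑ r : Fin n → Fin n, if Finset.univ.image r ⊆ S then g r else 0 := by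
    intro S
    have e1 : (∑ i ∈ S, N i).det = (Matrix.detRowAlternating (R := ℝ) (n := Fin n)).toMultilinearMap
        (fun a => ∑ i ∈ S, N i a) := by
      change Matrix.detRowAlternating (∑ i ∈ S, N i) = Matrix.detRowAlternating _
      congr 1
      funext a
      exact Finset.sum_apply a S N
    rw [e1, MultilinearMap.map_sum_finset, ← Finset.sum_filter]
    have e2 : Fintype.piFinset (fun _ : Fin n => S)
        = Finset.univ.filter (fun r : Fin n → Fin n => Finset.univ.image r ⊆ S) := by
      ext r; simp [Finset.image_subset_iff]
    rw [e2]
    rfl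
  simp_rw [h1, Finset.mul_sum]
  rw [Finset.sum_comm]
  have h2 : ∀ r : Fin n → Fin n,
      ∑ S : Finset (Fin n), (-1 : ℝ) ^ (n - S.card) * (if Finset.univ.image r ⊆ S then g r else 0)
      = if Finset.univ.image r = Finset.univ then g r else 0 := by
    intro r
    have := sum_superset_neg_one_pow (Finset.univ.image r)
    calc _ = (∑ S : Finset (Fin n),
          (if Finset.univ.image r ⊆ S then (-1 : ℝ) ^ (n - S.card) else 0)) * g r := by
          rw [Finset.sum_mul]
          exact Finset.sum_congr rfl fun S _ => by split_ifs <;> simp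
      _ = _ := by rw [this]; split_ifs <;> simp
  simp_rw [h2]
  rw [← Finset.sum_filter, mixedDisc_apply]
  symm
  refine Finset.sum_bij (fun σ _ => (σ : Fin n → Fin n)) ?_ ?_ ?_ ?_
  · intro σ _
    simp [Finset.image_univ_of_surjective σ.surjective]
  · intro σ _ τ _ h
    exact DFunLike.coe_injective h
  · intro r hr
    have hs : Function.Surjective r := by
      rw [Finset.mem_filter] at hr
      intro b
      have hb : b ∈ Finset.univ.image r := by rw [hr.2]; exact Finset.mem_univ b
      simpa using hb
    exact ⟨Equiv.ofBijective r (Finite.surjective_iff_bijective.1 hs), Finset.mem_univ _, rfl⟩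
  · intro σ _
    rfl

/-- Two rank-one arguments with the same row space contribute two proportional rows to every
determinant of the sum. -/
lemma mixedDisc_eq_zero {n : ℕ} {N : Fin n → Matrix (Fin n) (Fin n) ℝ} {i j : Fin n}
    (hij : i ≠ j) {u v w : Fin n → ℝ} (hi : N i = Matrix.vecMulVec u w)
    (hj : N j = Matrix.vecMulVec v w) : mixedDisc n N = 0 := by
  rw [mixedDisc_apply]
  refine Finset.sum_eq_zero fun σ _ => ?_
  set A : Matrix (Fin n) (Fin n) ℝ := Matrix.of fun a => N (σ a) a with hA
  have ha : A (σ.symm i) = u (σ.symm i) • w := by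
    funext k; simp [hA, hi, Matrix.vecMulVec_apply]
  have hb : A (σ.symm j) = v (σ.symm j) • w := by
    funext k; simp [hA, hj, Matrix.vecMulVec_apply]
  have hne : σ.symm i ≠ σ.symm j := fun h => hij (σ.symm.injective h)
  have h1 : A = (A.updateRow (σ.symm i) (u (σ.symm i) • w)).updateRow (σ.symm j)
      (v (σ.symm j) • w) := by
    rw [← ha, Matrix.updateRow_eq_self, ← hb, Matrix.updateRow_eq_self]
  rw [h1, Matrix.det_updateRow_smul, Matrix.updateRow_comm _ hne, Matrix.det_updateRow_smul,
    Matrix.det_zero_of_row_eq hne, mul_zero, mul_zero]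
  funext k
  simp [Matrix.updateRow_apply]

/-- If a multilinear map vanishes whenever two arguments equal `H`, then expanding its diagonal
value at `P + H` leaves only the terms with at most one `H`. -/
lemma map_const_add {V : Type*} [AddCommGroup V] [Module ℝ V] {k : ℕ}
    (g : MultilinearMap ℝ (fun _ : Fin k => V) ℝ) (P H : V)
    (hg : ∀ (v : Fin k → V) (i j : Fin k), i ≠ j → v i = H → v j = H → g v = 0) :
    g (fun _ => P + H) = g (fun _ => P) + ∑ i, g (Function.update (fun _ => P) i H) := by
  have h := g.map_add_eq_map_add_linearDeriv_add (fun _ => P) (fun _ => H)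
  have h0 : ∑ s : Finset (Fin k) with 2 ≤ s.card,
      g (s.piecewise (fun _ => H) (fun _ => P)) = 0 := by
    refine Finset.sum_eq_zero fun s hs => ?_
    obtain ⟨i, hi, j, hj, hij⟩ := Finset.one_lt_card.1 (Finset.mem_filter.1 hs).2
    exact hg _ i j hij (by simp [hi]) (by simp [hj])
  rw [h0, add_zero, MultilinearMap.linearDeriv_apply] at h
  exact h

lemma mixedDisc_cons_perm {m : ℕ} (Q : Matrix (Fin (m + 1)) (Fin (m + 1)) ℝ)
    (v : Fin m → Matrix (Fin (m + 1)) (Fin (m + 1)) ℝ) (e : Equiv.Perm (Fin m)) :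
    mixedDisc (m + 1) (Fin.cons Q (fun i => v (e i))) = mixedDisc (m + 1) (Fin.cons Q v) := by
  rw [← mixedDisc_perm (Fin.cons Q v) (Equiv.Perm.decomposeFin.symm (0, e))]
  congr 1
  funext i
  refine Fin.cases ?_ (fun i => ?_) i <;> simp

lemma mixedDisc_swap {m : ℕ} (Q H : Matrix (Fin (m + 2)) (Fin (m + 2)) ℝ)
    (v : Fin m → Matrix (Fin (m + 2)) (Fin (m + 2)) ℝ) :
    mixedDisc (m + 2) (Fin.cons Q (Fin.cons H v))
      = mixedDisc (m + 2) (Fin.cons H (Fin.cons Q v)) := by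
  rw [← mixedDisc_perm (Fin.cons H (Fin.cons Q v)) (Equiv.swap 0 1)]
  congr 1
  funext i
  refine Fin.cases ?_ (fun i => Fin.cases ?_ (fun i => ?_) i) i
  · rw [Equiv.swap_apply_left]; rfl
  · rw [show (Fin.succ 0 : Fin (m + 2)) = 1 from rfl, Equiv.swap_apply_right]; rfl
  · have h : Equiv.swap (0 : Fin (m + 2)) 1 i.succ.succ = i.succ.succ :=
      Equiv.swap_apply_of_ne_of_ne (Fin.succ_ne_zero _)
        (fun h => Fin.succ_ne_zero i (Fin.succ_injective _ h))
    rw [h]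
    rfl

lemma update_const_eq {α : Type*} {k : ℕ} (P H : α) (i : Fin (k + 1)) :
    Function.update (fun _ : Fin (k + 1) => P) i H
      = fun j => (Fin.cons H (fun _ : Fin k => P) : Fin (k + 1) → α) (Equiv.swap 0 i j) := by
  funext j
  by_cases hj : j = i
  · subst hj; simp
  · rw [Function.update_of_ne hj]
    have : Equiv.swap 0 i j ≠ 0 := fun h => hj (by
      rw [← Equiv.swap_apply_left 0 i] at h
      rw [Equiv.swap_apply_left] at h
      have := congrArg (Equiv.swap 0 i) h
      simpa using this)
    obtain ⟨l, hl⟩ := Fin.exists_succ_eq_of_ne_zero this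
    rw [← hl, Fin.cons_succ]

section Rank1

variable {m : ℕ} {P Q R : Matrix (Fin (m + 2)) (Fin (m + 2)) ℝ} {p w : Fin (m + 2) → ℝ}

lemma mixedDisc_const_add (hR : R = Matrix.vecMulVec p w) :
    mixedDisc (m + 2) (fun _ => P + R)
      = mixedDisc (m + 2) (fun _ => P)
        + (m + 2) * mixedDisc (m + 2) (Fin.cons R (fun _ : Fin (m + 1) => P)) := by
  rw [map_const_add _ P R fun v i j hij hi hj =>
    mixedDisc_eq_zero hij (hi.trans hR) (hj.trans hR)]
  simp only [update_const_eq, mixedDisc_perm]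
  simp

lemma mixedDisc_cons_const_add (hR : R = Matrix.vecMulVec p w) :
    mixedDisc (m + 2) (Fin.cons Q (fun _ : Fin (m + 1) => P + R))
      = mixedDisc (m + 2) (Fin.cons Q (fun _ : Fin (m + 1) => P))
        + (m + 1) * mixedDisc (m + 2) (Fin.cons R (Fin.cons Q (fun _ : Fin m => P))) := by
  have h := map_const_add ((mixedDisc (m + 2)).curryLeft Q) P R fun v i j hij hi hj =>
    mixedDisc_eq_zero (i := i.succ) (j := j.succ) (fun h => hij (Fin.succ_injective _ h))
      (by simpa using hi.trans hR) (by simpa using hj.trans hR)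
  simp only [MultilinearMap.curryLeft_apply, update_const_eq, mixedDisc_cons_perm,
    mixedDisc_swap Q R] at h
  rw [h]
  simp

lemma mixedDisc_cons_rank_one_const_add {t : ℝ} (hR : R = Matrix.vecMulVec p w) :
    mixedDisc (m + 2) (Fin.cons R (fun _ : Fin (m + 1) => P + t • R))
      = mixedDisc (m + 2) (Fin.cons R (fun _ : Fin (m + 1) => P)) := by
  have hR' : t • R = Matrix.vecMulVec (t • p) w := by rw [hR, Matrix.smul_vecMulVec]
  have h0 : mixedDisc (m + 2) (Fin.cons (t • R) (Fin.cons R (fun _ : Fin m => P))) = 0 :=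
    mixedDisc_eq_zero (i := 0) (j := 1) (by simp) hR' hR
  rw [mixedDisc_cons_const_add hR', h0, mul_zero, add_zero]

lemma mixedDisc_cons_cons_const_add {t : ℝ} (hR : R = Matrix.vecMulVec p w) :
    mixedDisc (m + 2) (Fin.cons R (Fin.cons Q (fun _ : Fin m => P + t • R)))
      = mixedDisc (m + 2) (Fin.cons R (Fin.cons Q (fun _ : Fin m => P))) := by
  have hR' : t • R = Matrix.vecMulVec (t • p) w := by rw [hR, Matrix.smul_vecMulVec]
  have hz : ∀ (v : Fin m → Matrix (Fin (m + 2)) (Fin (m + 2)) ℝ) (i : Fin m), v i = t • R →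
      mixedDisc (m + 2) (Fin.cons R (Fin.cons Q v)) = 0 := fun v i hi =>
    mixedDisc_eq_zero (i := 0) (j := i.succ.succ) (Fin.succ_ne_zero _).symm hR
      (by rw [Fin.cons_succ, Fin.cons_succ]; exact hi.trans hR')
  have h := map_const_add (((mixedDisc (m + 2)).curryLeft R).curryLeft Q) P (t • R)
    fun v i j hij hi hj => hz v i hi
  simp only [MultilinearMap.curryLeft_apply] at h
  rw [h, Finset.sum_eq_zero fun i _ => hz _ i (by simp), add_zero]

end Rank1

end MixedDiscriminant

/-! ### Mixed volumes as integrals of mixed discriminants -/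

section MixedVolume

lemma sum_smul_sets {E : Type*} [AddCommGroup E] [Module ℝ E] {ι α : Type*} [Fintype ι]
    {B : ι → Set E} (hne : ∀ j, (B j).Nonempty) (hconv : ∀ j, Convex ℝ (B j))
    {w : α → ι → ℝ} (hw : ∀ i j, 0 ≤ w i j) (S : Finset α) :
    ∑ i ∈ S, ∑ j, w i j • B j = ∑ j, (∑ i ∈ S, w i j) • B j := by
  rw [Finset.sum_comm]
  refine Finset.sum_congr rfl fun j _ => ?_
  classical
  induction S using Finset.induction_on with
  | empty => simp [Set.zero_smul_set (hne j)]
  | insert a s ha ih =>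
    rw [Finset.sum_insert ha, Finset.sum_insert ha, ih,
      (hconv j).add_smul (hw a j) (Finset.sum_nonneg fun i _ => hw i j)]

/-- The matrix of the derivative of `π` at `x` in the standard basis. -/
noncomputable def jac {n : ℕ} (π : EuclideanSpace ℝ (Fin n) → EuclideanSpace ℝ (Fin n))
    (x : EuclideanSpace ℝ (Fin n)) : Matrix (Fin n) (Fin n) ℝ :=
  LinearMap.toMatrix (EuclideanSpace.basisFun (Fin n) ℝ).toBasis
    (EuclideanSpace.basisFun (Fin n) ℝ).toBasis (fderiv ℝ π x).toLinearMap

variable {n : ℕ} {ι : Type*} [Fintype ι] {B : ι → Set (EuclideanSpace ℝ (Fin n))}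
  {π : ι → EuclideanSpace ℝ (Fin n) → EuclideanSpace ℝ (Fin n)}

lemma det_sum_jac (c : ι → ℝ) (x : EuclideanSpace ℝ (Fin n)) :
    (∑ j, c j • jac (π j) x).det = (∑ j, c j • fderiv ℝ (π j) x).det := by
  have e : ((∑ j, c j • fderiv ℝ (π j) x : EuclideanSpace ℝ (Fin n) →L[ℝ]
      EuclideanSpace ℝ (Fin n)) : EuclideanSpace ℝ (Fin n) →ₗ[ℝ] EuclideanSpace ℝ (Fin n))
      = ∑ j, c j • (fderiv ℝ (π j) x).toLinearMap := by
    ext1 v; simp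
  rw [ContinuousLinearMap.det, e,
    ← LinearMap.det_toMatrix (EuclideanSpace.basisFun (Fin n) ℝ).toBasis]
  simp [jac]

lemma volume_sum_smul_jac (hπ : ∀ j, IsProj (B j) (π j)) (hcomp : ∀ j, IsCompact (B j))
    (hconv : ∀ j, Convex ℝ (B j)) {c : ι → ℝ} (hc : ∀ j, 0 ≤ c j) :
    Integrable (fun x => (∑ j, c j • jac (π j) x).det) ∧
    (volume (∑ j, c j • B j)).toReal = ∫ x, (∑ j, c j • jac (π j) x).det := by
  simp only [det_sum_jac]
  exact volume_sum_smul hπ hc hcomp hconv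

/-- The mixed volume of Minkowski combinations of convex bodies is the integral of the mixed
discriminants of the corresponding combinations of derivatives of metric projections. -/
lemma mixedVol_sum_smul (hπ : ∀ j, IsProj (B j) (π j)) (hcomp : ∀ j, IsCompact (B j))
    (hconv : ∀ j, Convex ℝ (B j)) {w : Fin n → ι → ℝ} (hw : ∀ i j, 0 ≤ w i j) :
    Integrable (fun x => mixedDisc n (fun i => ∑ j, w i j • jac (π j) x)) ∧
    mixedVol (fun i => ∑ j, w i j • B j)
      = (n.factorial : ℝ)⁻¹ * ∫ x, mixedDisc n (fun i => ∑ j, w i j • jac (π j) x) := by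
  have hne : ∀ j, (B j).Nonempty := fun j => ⟨_, (hπ j 0).1⟩
  have hS : ∀ S : Finset (Fin n), ∀ j, 0 ≤ ∑ i ∈ S, w i j := fun S j =>
    Finset.sum_nonneg fun i _ => hw i j
  have e : ∀ x (S : Finset (Fin n)), ∑ i ∈ S, ∑ j, w i j • jac (π j) x
      = ∑ j, (∑ i ∈ S, w i j) • jac (π j) x := fun x S => by
    rw [Finset.sum_comm]
    simp only [Finset.sum_smul]
  simp only [mixedVol, ← polarization_det, e, sum_smul_sets hne hconv hw]
  have hint : ∀ S ∈ (Finset.univ : Finset (Finset (Fin n))), Integrable (fun x =>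
      (-1 : ℝ) ^ (n - S.card) * (∑ j, (∑ i ∈ S, w i j) • jac (π j) x).det) := fun S _ =>
    (volume_sum_smul_jac hπ hcomp hconv (hS S)).1.const_mul _
  refine ⟨integrable_finsetSum _ hint, ?_⟩
  rw [integral_finsetSum _ hint]
  congr 1
  refine Finset.sum_congr rfl fun S _ => ?_
  rw [integral_const_mul, (volume_sum_smul_jac hπ hcomp hconv (hS S)).2]

/-- If `f` takes values in the line spanned by `p`, then every column of its Jacobian matrix is a
multiple of `p`. -/
lemma jac_rank_one {f : EuclideanSpace ℝ (Fin n) → EuclideanSpace ℝ (Fin n)}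
    {p : EuclideanSpace ℝ (Fin n)} (hf : ∀ x, f x ∈ Submodule.span ℝ {p})
    (x : EuclideanSpace ℝ (Fin n)) :
    ∃ w : Fin n → ℝ, jac f x = Matrix.vecMulVec (fun a => p a) w := by
  have h := fun b => Submodule.mem_span_singleton.1
    (fderiv_mem_span hf x (EuclideanSpace.basisFun (Fin n) ℝ b))
  choose w hw using h
  refine ⟨w, ?_⟩
  ext a b
  have h1 : jac f x a b = (fderiv ℝ f x (EuclideanSpace.basisFun (Fin n) ℝ b)) a := by
    simp [jac, LinearMap.toMatrix_apply]
  rw [h1, ← hw b, Matrix.vecMulVec_apply]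
  simp [mul_comm]

end MixedVolume

/-! ### Adding a segment -/

section Parallel

variable {m : ℕ}

/-- Along the family `K + tI`, with `I` a segment, the volume and `V(·[n-1], A)` are affine in `t`,
while `V(·[n-1], I)` and `V(·[n-2], I, A)` are constant. -/
lemma parallel_mixedVol {K A I : Set (EuclideanSpace ℝ (Fin (m + 2)))}
    (hKconv : Convex ℝ K) (hKcomp : IsCompact K) (hKne : K.Nonempty)
    (hAconv : Convex ℝ A) (hAcomp : IsCompact A) (hAne : A.Nonempty)
    {p : EuclideanSpace ℝ (Fin (m + 2))} (hI : I = segment ℝ (-p) p) {t : ℝ} (ht : 0 ≤ t) :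
    (volume (K + t • I)).toReal = (volume K).toReal + t * ((m + 2) * mvOne K I) ∧
    mvOne (K + t • I) I = mvOne K I ∧
    mvOne (K + t • I) A = mvOne K A + t * ((m + 1) * mvTwo K I A) ∧
    mvTwo (K + t • I) I A = mvTwo K I A := by
  have hIne : I.Nonempty := ⟨p, hI ▸ right_mem_segment ℝ (-p) p⟩
  have hIcomp : IsCompact I := by
    rw [hI, segment_eq_image_lineMap]
    exact isCompact_Icc.image AffineMap.lineMap_continuous
  have hIconv : Convex ℝ I := hI ▸ convex_segment _ _
  have hIspan : ∀ x ∈ I, x ∈ Submodule.span ℝ {p} := by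
    rw [hI]
    rintro x ⟨a, b, -, -, -, rfl⟩
    exact Submodule.mem_span_singleton.2 ⟨b - a, by module⟩
  obtain ⟨πK, hπK⟩ := exists_isProj hKne hKcomp hKconv
  obtain ⟨πI, hπI⟩ := exists_isProj hIne hIcomp hIconv
  obtain ⟨πA, hπA⟩ := exists_isProj hAne hAcomp hAconv
  have hR := jac_rank_one (fun x => hIspan _ (hπI x).1)
  have hπ : ∀ j, IsProj (![K, I, A] j) (![πK, πI, πA] j) := by
    intro j; fin_cases j <;> assumption
  have hcomp : ∀ j, IsCompact (![K, I, A] j) := by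
    intro j; fin_cases j <;> assumption
  have hconv : ∀ j, Convex ℝ (![K, I, A] j) := by
    intro j; fin_cases j <;> assumption
  have hvol : ∀ s : ℝ, 0 ≤ s →
      Integrable (fun x => (jac πK x + s • jac πI x).det) ∧
      (volume (K + s • I)).toReal = ∫ x, (jac πK x + s • jac πI x).det := by
    intro s hs
    have := volume_sum_smul_jac hπ hcomp hconv (c := ![1, s, 0])
      (by intro j; fin_cases j <;> simp [hs])
    simpa [Fin.sum_univ_three, Set.zero_smul_set hAne] using this
  have hone : ∀ s : ℝ, 0 ≤ s →
      (Integrable (fun x => mixedDisc (m + 2)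
        (Fin.cons (jac πI x) (fun _ : Fin (m + 1) => jac πK x + s • jac πI x))) ∧
      mvOne (K + s • I) I = ((m + 2).factorial : ℝ)⁻¹ * ∫ x, mixedDisc (m + 2)
        (Fin.cons (jac πI x) (fun _ : Fin (m + 1) => jac πK x + s • jac πI x))) ∧
      (Integrable (fun x => mixedDisc (m + 2)
        (Fin.cons (jac πA x) (fun _ : Fin (m + 1) => jac πK x + s • jac πI x))) ∧
      mvOne (K + s • I) A = ((m + 2).factorial : ℝ)⁻¹ * ∫ x, mixedDisc (m + 2)
        (Fin.cons (jac πA x) (fun _ : Fin (m + 1) => jac πK x + s • jac πI x))) ∧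
      (Integrable (fun x => mixedDisc (m + 2) (Fin.cons (jac πI x)
        (Fin.cons (jac πA x) (fun _ : Fin m => jac πK x + s • jac πI x)))) ∧
      mvTwo (K + s • I) I A = ((m + 2).factorial : ℝ)⁻¹ * ∫ x, mixedDisc (m + 2)
        (Fin.cons (jac πI x)
          (Fin.cons (jac πA x) (fun _ : Fin m => jac πK x + s • jac πI x)))) := by
    intro s hs
    have hs3 : ∀ j, 0 ≤ (![1, s, 0] : Fin 3 → ℝ) j := by
      intro j; fin_cases j <;> simp [hs]
    have h010 : ∀ j, 0 ≤ (![0, 1, 0] : Fin 3 → ℝ) j := by intro j; fin_cases j <;> simp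
    have h001 : ∀ j, 0 ≤ (![0, 0, 1] : Fin 3 → ℝ) j := by intro j; fin_cases j <;> simp
    have hz := Set.zero_smul_set (α := ℝ) hAne
    have hz' := Set.zero_smul_set (α := ℝ) hIne
    have hz'' := Set.zero_smul_set (α := ℝ) hKne
    refine ⟨?_, ?_, ?_⟩
    · have h := mixedVol_sum_smul hπ hcomp hconv
        (w := Fin.cons ![0, 1, 0] (fun _ : Fin (m + 1) => ![1, s, 0]))
        (fun i => Fin.cases h010 (fun _ => hs3) i)
      have e1 : (fun i => ∑ j, (Fin.cons ![0, 1, 0] (fun _ : Fin (m + 1) => ![1, s, 0]) :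
          Fin (m + 2) → Fin 3 → ℝ) i j • ![K, I, A] j)
          = Fin.cons I (fun _ => K + s • I) := by
        funext i
        refine Fin.cases ?_ (fun i => ?_) i <;> simp [Fin.sum_univ_three, hz, hz'']
      have e2 : ∀ x, (fun i => ∑ j, (Fin.cons ![0, 1, 0] (fun _ : Fin (m + 1) => ![1, s, 0]) :
          Fin (m + 2) → Fin 3 → ℝ) i j • jac (![πK, πI, πA] j) x)
          = Fin.cons (jac πI x) (fun _ => jac πK x + s • jac πI x) := by
        intro x
        funext i
        refine Fin.cases ?_ (fun i => ?_) i <;> simp [Fin.sum_univ_three]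
      simpa only [e1, e2, mvOne, mvTwo] using h
    · have h := mixedVol_sum_smul hπ hcomp hconv
        (w := Fin.cons ![0, 0, 1] (fun _ : Fin (m + 1) => ![1, s, 0]))
        (fun i => Fin.cases h001 (fun _ => hs3) i)
      have e1 : (fun i => ∑ j, (Fin.cons ![0, 0, 1] (fun _ : Fin (m + 1) => ![1, s, 0]) :
          Fin (m + 2) → Fin 3 → ℝ) i j • ![K, I, A] j)
          = Fin.cons A (fun _ => K + s • I) := by
        funext i
        refine Fin.cases ?_ (fun i => ?_) i <;> simp [Fin.sum_univ_three, hz, hz', hz'']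
      have e2 : ∀ x, (fun i => ∑ j, (Fin.cons ![0, 0, 1] (fun _ : Fin (m + 1) => ![1, s, 0]) :
          Fin (m + 2) → Fin 3 → ℝ) i j • jac (![πK, πI, πA] j) x)
          = Fin.cons (jac πA x) (fun _ => jac πK x + s • jac πI x) := by
        intro x
        funext i
        refine Fin.cases ?_ (fun i => ?_) i <;> simp [Fin.sum_univ_three]
      simpa only [e1, e2, mvOne, mvTwo] using h
    · have h := mixedVol_sum_smul hπ hcomp hconv
        (w := Fin.cons ![0, 1, 0] (Fin.cons ![0, 0, 1] (fun _ : Fin m => ![1, s, 0])))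
        (fun i => Fin.cases h010 (fun i => Fin.cases h001 (fun _ => hs3) i) i)
      have e1 : (fun i => ∑ j, (Fin.cons ![0, 1, 0]
          (Fin.cons ![0, 0, 1] (fun _ : Fin m => ![1, s, 0])) :
          Fin (m + 2) → Fin 3 → ℝ) i j • ![K, I, A] j)
          = Fin.cons I (Fin.cons A (fun _ => K + s • I)) := by
        funext i
        refine Fin.cases ?_ (fun i => Fin.cases ?_ (fun i => ?_) i) i <;>
          simp [Fin.sum_univ_three, hz, hz', hz'']
      have e2 : ∀ x, (fun i => ∑ j, (Fin.cons ![0, 1, 0]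
          (Fin.cons ![0, 0, 1] (fun _ : Fin m => ![1, s, 0])) :
          Fin (m + 2) → Fin 3 → ℝ) i j • jac (![πK, πI, πA] j) x)
          = Fin.cons (jac πI x) (Fin.cons (jac πA x) (fun _ => jac πK x + s • jac πI x)) := by
        intro x
        funext i
        refine Fin.cases ?_ (fun i => Fin.cases ?_ (fun i => ?_) i) i <;>
          simp [Fin.sum_univ_three]
      simpa only [e1, e2, mvOne, mvTwo] using h
  have hv0 := hvol 0 le_rfl
  have ho0 := hone 0 le_rfl
  simp only [zero_smul, Set.zero_smul_set hIne, add_zero] at hv0 ho0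
  obtain ⟨hvi, hv⟩ := hv0
  obtain ⟨⟨hci, hc⟩, ⟨hai, ha⟩, ⟨hbi, hb⟩⟩ := ho0
  have hRt : ∀ x, ∃ w : Fin (m + 2) → ℝ,
      t • jac πI x = Matrix.vecMulVec (t • fun a => p a) w := fun x => by
    obtain ⟨w, hw⟩ := hR x
    exact ⟨w, by rw [hw, Matrix.smul_vecMulVec]⟩
  -- Homogeneity in the first argument.
  have hsmul : ∀ (M : Matrix (Fin (m + 2)) (Fin (m + 2)) ℝ)
      (v : Fin (m + 1) → Matrix (Fin (m + 2)) (Fin (m + 2)) ℝ),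
      mixedDisc (m + 2) (Fin.cons (t • M) v) = t * mixedDisc (m + 2) (Fin.cons M v) :=
    fun M v => (mixedDisc (m + 2)).cons_smul v t M
  have hfac : ((m + 2).factorial : ℝ) ≠ 0 := by positivity
  refine ⟨?_, ?_, ?_, ?_⟩
  · have e : ∀ x, (jac πK x + t • jac πI x).det = (jac πK x).det
        + t * ((m + 2) * (((m + 2).factorial : ℝ)⁻¹ *
          mixedDisc (m + 2) (Fin.cons (jac πI x) (fun _ : Fin (m + 1) => jac πK x)))) := by
      intro x
      obtain ⟨w, hw⟩ := hRt x
      have h := mixedDisc_const_add (P := jac πK x) hw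
      rw [mixedDisc_const, mixedDisc_const, hsmul] at h
      field_simp
      linarith
    rw [(hvol t ht).2, hv, hc]
    simp only [e]
    rw [integral_add hvi (((hci.const_mul _).const_mul _).const_mul _), integral_const_mul,
      integral_const_mul, integral_const_mul]
  · rw [(hone t ht).1.2, hc]
    congr 1
    refine integral_congr_ae (Filter.Eventually.of_forall fun x => ?_)
    obtain ⟨w, hw⟩ := hR x
    exact mixedDisc_cons_rank_one_const_add hw
  · have e : ∀ x, mixedDisc (m + 2)
        (Fin.cons (jac πA x) (fun _ : Fin (m + 1) => jac πK x + t • jac πI x))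
        = mixedDisc (m + 2) (Fin.cons (jac πA x) (fun _ : Fin (m + 1) => jac πK x))
        + t * ((m + 1) * mixedDisc (m + 2) (Fin.cons (jac πI x)
          (Fin.cons (jac πA x) (fun _ : Fin m => jac πK x)))) := by
      intro x
      obtain ⟨w, hw⟩ := hRt x
      rw [mixedDisc_cons_const_add hw, hsmul]
      ring
    rw [(hone t ht).2.1.2, ha, hb]
    simp only [e]
    rw [integral_add hai ((hbi.const_mul _).const_mul _), integral_const_mul,
      integral_const_mul]
    ring
  · rw [(hone t ht).2.2.2, hb]
    congr 1
    refine integral_congr_ae (Filter.Eventually.of_forall fun x => ?_)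
    obtain ⟨w, hw⟩ := hR x
    exact mixedDisc_cons_cons_const_add hw

/-- Adding a nondegenerate centred segment strictly increases the volume: the translate by `p` of a
point of `K` that is extreme in the direction `p` lies outside `K` but in the closure of
the interior of `K + I`. -/
lemma volume_lt_volume_add {n : ℕ} {K I : Set (EuclideanSpace ℝ (Fin n))}
    (hKconv : Convex ℝ K) (hKcomp : IsCompact K) (hKint : (interior K).Nonempty)
    {p : EuclideanSpace ℝ (Fin n)} (hp : p ≠ 0) (hI : I = segment ℝ (-p) p) :
    (volume K).toReal < (volume (K + I)).toReal := by
  have hIcomp : IsCompact I := by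
    rw [hI, segment_eq_image_lineMap]
    exact isCompact_Icc.image AffineMap.lineMap_continuous
  have hIconv : Convex ℝ I := hI ▸ convex_segment _ _
  have hpI : p ∈ I := hI ▸ right_mem_segment ℝ (-p) p
  have h0I : (0 : EuclideanSpace ℝ (Fin n)) ∈ I := by
    rw [hI]
    exact ⟨1 / 2, 1 / 2, by norm_num, by norm_num, by norm_num, by module⟩
  have hsub : K ⊆ K + I := fun x hx => ⟨x, hx, 0, h0I, add_zero x⟩
  obtain ⟨x, hxK, hx⟩ := hKcomp.exists_isMaxOn (hKint.mono interior_subset)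
    (f := fun y => inner ℝ p y) (by fun_prop)
  have hxp : x + p ∉ K := fun h => by
    have h1 := hx h
    simp only [mem_ofPred_eq, inner_add_right, real_inner_self_eq_norm_sq] at h1
    have : 0 < ‖p‖ := norm_pos_iff.2 hp
    nlinarith
  have hint : (interior (K + I)).Nonempty := hKint.mono (interior_mono hsub)
  have hcl : x + p ∈ closure (interior (K + I)) := by
    rw [(hKconv.add hIconv).closure_interior_eq_closure_of_nonempty_interior hint]
    exact subset_closure ⟨x, hxK, p, hpI, rfl⟩
  have hne : (Kᶜ ∩ interior (K + I)).Nonempty :=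
    mem_closure_iff.1 hcl _ hKcomp.isClosed.isOpen_compl hxp
  have hpos : 0 < volume (Kᶜ ∩ interior (K + I)) :=
    (hKcomp.isClosed.isOpen_compl.inter isOpen_interior).measure_pos volume hne
  have hfin : volume (K + I) ≠ ⊤ := (hKcomp.add hIcomp).measure_lt_top.ne
  refine (ENNReal.toReal_lt_toReal hKcomp.measure_lt_top.ne hfin).2 ?_
  calc volume K < volume K + volume (Kᶜ ∩ interior (K + I)) :=
        ENNReal.lt_add_right hKcomp.measure_lt_top.ne hpos.ne'
    _ = volume (K ∪ (Kᶜ ∩ interior (K + I))) := by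
        rw [measure_union' (disjoint_compl_right.mono_right inter_subset_left)
          hKcomp.measurableSet]
    _ ≤ volume (K + I) :=
        measure_mono (union_subset hsub (inter_subset_right.trans interior_subset))

lemma minkDiff_eq_iInter {n : ℕ} (K L : Set (EuclideanSpace ℝ (Fin n))) :
    minkDiff K L = ⋂ y ∈ L, (fun x => y + x) ⁻¹' K := by
  ext x; simp [minkDiff]

end Parallel

/-- Let `K ∈ 𝒦ⁿ_s` (`n = m+2`), `I` an origin-symmetric segment with
`K = (K ⊖ I) + I` and `K ⊖ I` of nonempty interior, and set `K_t = (K ⊖ I) + tI`.  If the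
difference of support functions `f̄ = h_A − h_B` (with `A, B` origin-symmetric bodies) satisfies
the normalization `V(K[n-1], f̄)/V(K) = ((n-1)/n)·V(K[n-2], I, f̄)/V(K[n-1], I)`, then for every
`t ∈ [0,1]`, `V(K_t[n-1], f̄)/V(K_t) = ((n-1)/n)·V(K_t[n-2], I, f̄)/V(K_t[n-1], I)`. -/
theorem normalization_propagates_along_parallel_bodies (m : ℕ)
    (K A B : Set (EuclideanSpace ℝ (Fin (m + 2))))
    (hKconv : Convex ℝ K) (hKcomp : IsCompact K) (hKint : (interior K).Nonempty)
    (hKsym : ∀ x ∈ K, -x ∈ K)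
    (hAconv : Convex ℝ A) (hAcomp : IsCompact A) (hAne : A.Nonempty) (hAsym : ∀ x ∈ A, -x ∈ A)
    (hBconv : Convex ℝ B) (hBcomp : IsCompact B) (hBne : B.Nonempty) (hBsym : ∀ x ∈ B, -x ∈ B)
    (p : EuclideanSpace ℝ (Fin (m + 2))) (hp : p ≠ 0)
    (I : Set (EuclideanSpace ℝ (Fin (m + 2)))) (hI : I = segment ℝ (-p) p)
    (hdecomp : K = minkDiff K I + I)
    (hint' : (interior (minkDiff K I)).Nonempty)
    (Kt : ℝ → Set (EuclideanSpace ℝ (Fin (m + 2))))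
    (hKt : ∀ t : ℝ, Kt t = minkDiff K I + t • I)
    (hnorm : (mvOne K A - mvOne K B) / (volume K).toReal
      = ((m + 1 : ℝ) / (m + 2)) * ((mvTwo K I A - mvTwo K I B) / mvOne K I)) :
    ∀ t ∈ Icc (0 : ℝ) 1,
      (mvOne (Kt t) A - mvOne (Kt t) B) / (volume (Kt t)).toReal
        = ((m + 1 : ℝ) / (m + 2)) * ((mvTwo (Kt t) I A - mvTwo (Kt t) I B) / mvOne (Kt t) I) := by
  have hIp : (0 : EuclideanSpace ℝ (Fin (m + 2))) ∈ I := by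
    rw [hI]
    exact ⟨1 / 2, 1 / 2, by norm_num, by norm_num, by norm_num, by module⟩
  set K₀ := minkDiff K I with hK₀
  have h0conv : Convex ℝ K₀ := by
    rw [hK₀, minkDiff_eq_iInter]
    exact convex_iInter₂ fun y _ => hKconv.translate_preimage_right y
  have h0comp : IsCompact K₀ := by
    refine hKcomp.of_isClosed_subset ?_ fun x hx => by simpa using hx 0 hIp
    rw [hK₀, minkDiff_eq_iInter]
    exact isClosed_biInter fun y _ => hKcomp.isClosed.preimage (by fun_prop)
  have h0ne : K₀.Nonempty := hint'.mono interior_subset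
  have hA := fun {t : ℝ} (ht : 0 ≤ t) =>
    parallel_mixedVol h0conv h0comp h0ne hAconv hAcomp hAne hI ht
  have hB := fun {t : ℝ} (ht : 0 ≤ t) =>
    parallel_mixedVol h0conv h0comp h0ne hBconv hBcomp hBne hI ht
  have hv0 : 0 < (volume K₀).toReal :=
    ENNReal.toReal_pos (isOpen_interior.measure_pos volume hint' |>.trans_le (measure_mono interior_subset)).ne' h0comp.measure_lt_top.ne
  have hlt := volume_lt_volume_add h0conv h0comp hint' hp hI
  obtain ⟨v1, c1, a1, b1⟩ := hA zero_le_one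
  obtain ⟨-, -, a1', b1'⟩ := hB zero_le_one
  rw [one_smul] at v1 c1 a1 b1 a1' b1'
  have hm : (0 : ℝ) < m + 2 := by positivity
  have hc : 0 < mvOne K₀ I := by
    rw [v1] at hlt
    by_contra! hneg
    nlinarith
  rw [hdecomp, a1, a1', v1, b1, b1', c1] at hnorm
  intro t ht
  obtain ⟨vt, ct, at', bt⟩ := hA ht.1
  obtain ⟨-, -, at'', bt'⟩ := hB ht.1
  rw [hKt, at', at'', vt, bt, bt', ct]
  have hd1 : 0 < (volume K₀).toReal + 1 * ((m + 2) * mvOne K₀ I) := by positivity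
  have hdt : 0 < (volume K₀).toReal + t * ((m + 2) * mvOne K₀ I) := by
    have := mul_nonneg ht.1 (mul_pos hm hc).le
    linarith
  rw [div_mul_div_comm, div_eq_div_iff hd1.ne' (mul_pos hm hc).ne'] at hnorm
  rw [div_mul_div_comm, div_eq_div_iff hdt.ne' (mul_pos hm hc).ne']
  linear_combination hnorm
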